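/- Density of Cauchy kernels in Sobolev spaces: for every s ∈ ℝ, the linear span L_1 of the family of functions φ_z(x) := 1/(z−x), z ∈ ℂ∖ℝ, is dense in the Sobolev space (H_s, ‖·‖_{H_s}). -/

import Mathlib

/- Formalization of results from "Empirical spectral distributions of a Hermitian matrix
perturbed by a small random matrix" (arXiv:1701.02597). -/

open MeasureTheory Filter Set Complex
open scoped Topology ENNReal NNReal

noncomputable section

/-- The Fourier transform of the Cauchy kernel `φ_z(x) = 1/(z-x)` (Lemma 9.4):
`t ↦ -sgn(Im z)·2πi·𝟙_{Im(z)·t>0}·e^{itz}`. -/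
def cauchyFT (z : ℂ) (t : ℝ) : ℂ :=
  -((Real.sign z.im : ℝ) : ℂ) * (2 * (Real.pi : ℂ) * Complex.I) *
    (if 0 < z.im * t then 1 else 0) * Complex.exp (Complex.I * t * z)

/-!
On the Fourier side `H_s` is the space `L²(μ)` with `dμ = (1 + 2|k|)^(2s) dk`. If `g ∈ L²(μ)` is
orthogonal to `φ̂_{x + z}` for every real `x`, then, as `φ̂_{x + z}(t) = e^{itx} φ̂_z(t)`, the
Fourier transform of the complex measure `conj(φ̂_z) g dμ` vanishes identically, and so `g = 0` on
the half-line where `φ̂_z` is nonzero. The upper and the lower half plane give the two half-lines.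
-/

section FourierUniqueness

open scoped FourierTransform

variable {V E : Type*} [NormedAddCommGroup V] [InnerProductSpace ℝ V] [FiniteDimensional ℝ V]
  [MeasurableSpace V] [BorelSpace V] [NormedAddCommGroup E] [NormedSpace ℂ E] [CompleteSpace E]
  {μ : Measure V} [SigmaFinite μ] {h : V → E}

lemma integral_schwartzMap_smul_eq_zero_of_fourierIntegral_eq_zero (hh : Integrable h μ)
    (h0 : ∀ x, VectorFourier.fourierIntegral 𝐞 μ (innerₗ V) h x = 0) (G : SchwartzMap V ℂ) :
    ∫ v, G v • h v ∂μ = 0 := by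
  have hG : VectorFourier.fourierIntegral 𝐞 volume (innerₗ V) (𝓕⁻ G : SchwartzMap V ℂ) = G := by
    change 𝓕 ((𝓕⁻ G : SchwartzMap V ℂ) : V → ℂ) = G
    rw [← SchwartzMap.fourier_coe, FourierTransform.fourier_fourierInv_eq]
  calc ∫ v, G v • h v ∂μ
      = ∫ x, (𝓕⁻ G : SchwartzMap V ℂ) x •
          VectorFourier.fourierIntegral 𝐞 μ (innerₗ V).flip h x := by
        rw [← VectorFourier.integral_fourierIntegral_smul_eq_flip Real.continuous_fourierChar
          continuous_inner (𝓕⁻ G : SchwartzMap V ℂ).integrable hh, hG]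
    _ = 0 := by simp only [flip_innerₗ, h0, smul_zero, integral_zero]

theorem ae_eq_zero_of_fourierIntegral_eq_zero (hh : Integrable h μ)
    (h0 : ∀ x, VectorFourier.fourierIntegral 𝐞 μ (innerₗ V) h x = 0) : ∀ᵐ v ∂μ, h v = 0 := by
  refine ae_eq_zero_of_integral_contDiff_smul_eq_zero hh.locallyIntegrable fun g hg hg_supp => ?_
  have hg_supp' : HasCompactSupport fun v => (g v : ℂ) := hg_supp.comp_left ofReal_zero
  exact integral_schwartzMap_smul_eq_zero_of_fourierIntegral_eq_zero hh h0
    (hg_supp'.toSchwartzMap (ofRealCLM.contDiff.comp hg))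

end FourierUniqueness

section SquareIntegrable

variable {α E : Type*} [MeasurableSpace α] {μ : Measure α} [NormedAddCommGroup E]

lemma sigmaFinite_of_memLp_of_forall_ne_zero {p : ℝ≥0∞} {f : α → E} (hf : MemLp f p μ)
    (hfm : StronglyMeasurable f) (hp0 : p ≠ 0) (hp : p ≠ ∞) (hf0 : ∀ x, f x ≠ 0) :
    SigmaFinite μ := by
  obtain ⟨t, -, ht, hσ⟩ :=
    (hf.finStronglyMeasurable_of_stronglyMeasurable hfm hp0 hp).exists_set_sigmaFinite
  have ht_univ : t = univ := eq_univ_of_forall fun x => by_contra fun hx => hf0 x (ht x hx)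
  rwa [ht_univ, Measure.restrict_univ] at hσ

lemma norm_toLp_sq {f : α → E} (hf : MemLp f 2 μ) : ‖hf.toLp f‖ ^ 2 = ∫ x, ‖f x‖ ^ 2 ∂μ := by
  rw [Lp.norm_toLp, hf.eLpNorm_eq_integral_rpow_norm two_ne_zero ENNReal.ofNat_ne_top,
    ENNReal.toReal_ofReal (by positivity), ENNReal.toReal_ofNat]
  simp only [Real.rpow_ofNat]
  exact_mod_cast Real.rpow_inv_natCast_pow (by positivity) two_ne_zero

variable {𝕜 ι : Type*} [NormedField 𝕜] [NormedSpace 𝕜 E] {f : ι → α → E}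

lemma sum_smul_toLp_ae_eq {p : ℝ≥0∞} (hf : ∀ i, MemLp (f i) p μ) (s : Finset ι)
    (a : ι → 𝕜) :
    ⇑(∑ i ∈ s, a i • (hf i).toLp (f i)) =ᵐ[μ] fun x => ∑ i ∈ s, a i • f i x := by
  have hterm : ∀ᵐ x ∂μ, ∀ i ∈ s, (a i • (hf i).toLp (f i)) x = a i • f i x := by
    refine (ae_ball_iff s.countable_toSet).2 fun i _ => ?_
    filter_upwards [Lp.coeFn_smul (a i) ((hf i).toLp (f i)), (hf i).coeFn_toLp] with x hsmul hx
    rw [hsmul, Pi.smul_apply, hx]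
  filter_upwards [Lp.coeFn_fun_finsetSum s fun i => a i • (hf i).toLp (f i), hterm] with x hsum hx
  rw [hsum, Finset.sum_congr rfl hx]

lemma exists_integral_norm_sub_sum_smul_sq_lt (hf : ∀ i, MemLp (f i) 2 μ)
    (hdense : (Submodule.span 𝕜 (range fun i => (hf i).toLp (f i))).topologicalClosure = ⊤)
    {ψ : α → E} (hψ : MemLp ψ 2 μ) {δ : ℝ} (hδ : 0 < δ) :
    ∃ (m : ℕ) (j : Fin m → ι) (a : Fin m → 𝕜),
      ∫ x, ‖ψ x - ∑ i, a i • f (j i) x‖ ^ 2 ∂μ < δ := by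
  obtain ⟨y, hy, hdist⟩ := Metric.mem_closure_iff.1
    (Submodule.dense_iff_topologicalClosure_eq_top.2 hdense (hψ.toLp ψ)) √δ (Real.sqrt_pos.2 hδ)
  obtain ⟨m, a, w, rfl⟩ := Submodule.mem_span_set'.1 hy
  choose j hj using fun i => (w i).2
  refine ⟨m, j, a, ?_⟩
  have hsum : MemLp (fun x => ∑ i, a i • f (j i) x) 2 μ :=
    memLp_finsetSum _ fun i _ => (hf (j i)).const_smul (a i)
  have hw : ∑ i, a i • (w i : Lp E 2 μ) = hsum.toLp _ := by
    simp only [← hj]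
    exact Lp.ext ((sum_smul_toLp_ae_eq (fun i => hf (j i)) Finset.univ a).trans
      hsum.coeFn_toLp.symm)
  rw [hw, dist_eq_norm, ← MemLp.toLp_sub, Real.lt_sqrt (norm_nonneg _), norm_toLp_sq] at hdist
  exact hdist

end SquareIntegrable

section CauchyKernel

lemma measurable_cauchyFT (z : ℂ) : Measurable (cauchyFT z) := by
  have hstep : Measurable fun t : ℝ => if 0 < z.im * t then (1 : ℂ) else 0 :=
    Measurable.ite (measurableSet_lt measurable_const (by fun_prop)) measurable_const
      measurable_const
  unfold cauchyFT
  fun_prop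

lemma cauchyFT_ofReal_add (x : ℝ) (z : ℂ) (t : ℝ) :
    cauchyFT (x + z) t = exp (I * t * x) * cauchyFT z t := by
  simp only [cauchyFT, add_im, ofReal_im, zero_add, mul_add, Complex.exp_add]
  ring

lemma cauchyFT_ne_zero {z : ℂ} {t : ℝ} (h : 0 < z.im * t) : cauchyFT z t ≠ 0 := by
  have hsign : Real.sign z.im ≠ 0 := Real.sign_eq_zero_iff.not.2 (left_ne_zero_of_mul h.ne')
  simp [cauchyFT, h, hsign, Real.pi_ne_zero]

lemma norm_cauchyFT_le (z : ℂ) (t : ℝ) :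
    ‖cauchyFT z t‖ ≤ 2 * Real.pi * Real.exp (-(|z.im| * |t|)) := by
  by_cases h : 0 < z.im * t
  · have hsign : |Real.sign z.im| ≤ 1 := by
      rcases Real.sign_apply_eq z.im with hs | hs | hs <;> simp [hs]
    have hexp : (I * (t * z)).re = -(|z.im| * |t|) := by
      rw [← abs_mul, abs_of_pos h, I_mul_re, im_ofReal_mul, mul_comm]
    calc ‖cauchyFT z t‖
        = |Real.sign z.im| * (2 * Real.pi * Real.exp (-(|z.im| * |t|))) := by
          simp only [cauchyFT, if_pos h, norm_mul, norm_neg, norm_real, Real.norm_eq_abs, norm_exp,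
            hexp, norm_I, norm_ofNat, one_mul, abs_of_pos Real.pi_pos, mul_assoc]
      _ ≤ 2 * Real.pi * Real.exp (-(|z.im| * |t|)) := mul_le_of_le_one_left (by positivity) hsign
  · simp only [cauchyFT, if_neg h, mul_zero, zero_mul, norm_zero]
    positivity

variable {μ : Measure ℝ} {c : ℝ}

lemma memLp_cauchyFT {p : ℝ≥0∞} (hμ : MemLp (fun t => Real.exp (-(c * |t|))) p μ) {z : ℂ}
    (hz : |z.im| = c) : MemLp (cauchyFT z) p μ := by
  refine hμ.of_le_mul (c := 2 * Real.pi) (measurable_cauchyFT z).aestronglyMeasurable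
    (ae_of_all _ fun t => ?_)
  rw [Real.norm_eq_abs, Real.abs_exp, ← hz]
  exact norm_cauchyFT_le z t

open scoped FourierTransform in
lemma fourierIntegral_inner_cauchyFT (g : ℝ → ℂ) (z : ℂ) (x : ℝ) :
    VectorFourier.fourierIntegral 𝐞 μ (innerₗ ℝ) (fun t => inner ℂ (cauchyFT z t) (g t)) x =
      ∫ t, inner ℂ (cauchyFT ((2 * Real.pi * x : ℝ) + z) t) (g t) ∂μ := by
  refine integral_congr_ae (ae_of_all _ fun t => ?_)
  have hconj : (starRingEnd ℂ) (exp (I * t * (2 * Real.pi * x : ℝ))) = 𝐞 (-(t * x)) := by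
    rw [Real.fourierChar_apply, ← exp_conj]
    congr 1
    simp only [map_mul, conj_I, conj_ofReal]
    push_cast
    ring
  simp only [cauchyFT_ofReal_add, RCLike.inner_apply, map_mul, hconj, Circle.smul_def, smul_eq_mul,
    innerₗ_apply_apply]
  rw [conj_trivial, mul_comm x, mul_left_comm]

lemma ae_eq_zero_of_integral_inner_cauchyFT_eq_zero [SigmaFinite μ] {z : ℂ}
    (hz : MemLp (cauchyFT z) 2 μ) {g : ℝ → ℂ} (hg : MemLp g 2 μ)
    (horth : ∀ x : ℝ, ∫ t, inner ℂ (cauchyFT (x + z) t) (g t) ∂μ = 0) :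
    ∀ᵐ t ∂μ, 0 < z.im * t → g t = 0 := by
  have hint : Integrable (fun t => inner ℂ (cauchyFT z t) (g t)) μ := by
    simp only [RCLike.inner_apply]
    exact hg.integrable_mul hz.star
  have hprod := ae_eq_zero_of_fourierIntegral_eq_zero hint fun x => by
    rw [fourierIntegral_inner_cauchyFT, horth]
  filter_upwards [hprod] with t ht hpos
  simpa [cauchyFT_ne_zero hpos] using ht

theorem topologicalClosure_span_cauchyFT_eq_top (hc : 0 < c) (hμ0 : μ {0} = 0)
    (hμ : MemLp (fun t => Real.exp (-(c * |t|))) 2 μ) :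
    (Submodule.span ℂ (range fun z : {z : ℂ // |z.im| = c} =>
      (memLp_cauchyFT hμ z.2).toLp (cauchyFT z))).topologicalClosure = ⊤ := by
  have : SigmaFinite μ := sigmaFinite_of_memLp_of_forall_ne_zero hμ
    (by fun_prop) two_ne_zero ENNReal.ofNat_ne_top fun t => (Real.exp_pos _).ne'
  rw [Submodule.topologicalClosure_eq_top_iff, Submodule.eq_bot_iff]
  intro g hg
  have horth {z : ℂ} (hz : |z.im| = c) (x : ℝ) :
      ∫ t, inner ℂ (cauchyFT (x + z) t) (g t) ∂μ = 0 := by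
    have hxz : |(x + z).im| = c := by rwa [add_im, ofReal_im, zero_add]
    rw [← (Submodule.mem_orthogonal _ g).1 hg _ (Submodule.subset_span ⟨⟨x + z, hxz⟩, rfl⟩),
      L2.inner_def]
    refine integral_congr_ae ?_
    filter_upwards [(memLp_cauchyFT hμ hxz).coeFn_toLp] with t ht
    rw [ht]
  have hvanish {z : ℂ} (hz : |z.im| = c) : ∀ᵐ t ∂μ, 0 < z.im * t → g t = 0 :=
    ae_eq_zero_of_integral_inner_cauchyFT_eq_zero (memLp_cauchyFT hμ hz) (Lp.memLp g) (horth hz)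
  have hne : ∀ᵐ t ∂μ, t ≠ 0 := compl_mem_ae_iff.2 hμ0
  rw [Lp.eq_zero_iff_ae_eq_zero]
  filter_upwards [hne, hvanish (z := c * I) (by simp [hc.le]),
    hvanish (z := -(c * I)) (by simp [hc.le])] with t ht hupper hlower
  rcases lt_or_gt_of_ne ht with hneg | hpos
  · exact hlower (by simpa using mul_neg_of_pos_of_neg hc hneg)
  · exact hupper (by simpa using mul_pos hc hpos)

theorem density_of_cauchy_kernels_in_Hs_general (hc : 0 < c) (hμ0 : μ {0} = 0)
    (hμ : MemLp (fun t => Real.exp (-(c * |t|))) 2 μ) {ψ : ℝ → ℂ} (hψ : MemLp ψ 2 μ)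
    {δ : ℝ} (hδ : 0 < δ) :
    ∃ (m : ℕ) (zs : Fin m → ℂ) (a : Fin m → ℂ),
      (∀ i, |(zs i).im| = c) ∧ ∫ k, ‖ψ k - ∑ i, a i * cauchyFT (zs i) k‖ ^ 2 ∂μ < δ := by
  obtain ⟨m, zs, a, h⟩ := exists_integral_norm_sub_sum_smul_sq_lt
    (fun z : {z : ℂ // |z.im| = c} => memLp_cauchyFT hμ z.2)
    (topologicalClosure_span_cauchyFT_eq_top hc hμ0 hμ) hψ hδ
  exact ⟨m, fun i => zs i, a, fun i => (zs i).2, h⟩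

end CauchyKernel

section Sobolev

/-- The measure `(1 + 2|k|)^(2s) dk`, whose `L²` norm on the Fourier side is the norm of `H_s`. -/
def sobolevMeasure (s : ℝ) : Measure ℝ :=
  volume.withDensity fun k => ENNReal.ofReal ((1 + 2 * |k|) ^ (2 * s))

lemma sobolevMeasure_singleton (s x : ℝ) : sobolevMeasure s {x} = 0 :=
  withDensity_absolutelyContinuous _ _ (measure_singleton x)

lemma integral_sobolevMeasure {E : Type*} [NormedAddCommGroup E] [NormedSpace ℝ E] (s : ℝ)
    (f : ℝ → E) : ∫ k, f k ∂sobolevMeasure s = ∫ k, (1 + 2 * |k|) ^ (2 * s) • f k := by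
  rw [sobolevMeasure, integral_withDensity_eq_integral_toReal_smul (by fun_prop)
      (ae_of_all _ fun _ => ENNReal.ofReal_lt_top)]
  refine integral_congr_ae (ae_of_all _ fun k => ?_)
  dsimp only
  rw [ENNReal.toReal_ofReal (by positivity)]

lemma memLp_two_sobolevMeasure_iff {E : Type*} [NormedAddCommGroup E] {s : ℝ} {f : ℝ → E}
    (hf : AEStronglyMeasurable f) :
    MemLp f 2 (sobolevMeasure s) ↔
      Integrable fun k => (1 + 2 * |k|) ^ (2 * s) * ‖f k‖ ^ 2 := by
  rw [sobolevMeasure,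
    memLp_two_iff_integrable_sq_norm (hf.mono_ac (withDensity_absolutelyContinuous _ _)),
    integrable_withDensity_iff_integrable_smul' (by fun_prop)
      (ae_of_all _ fun _ => ENNReal.ofReal_lt_top)]
  refine integrable_congr (ae_of_all _ fun k => ?_)
  dsimp only
  rw [ENNReal.toReal_ofReal (by positivity), smul_eq_mul]

lemma integrable_rpow_mul_exp_neg_mul_abs (p : ℝ) {c : ℝ} (hc : 0 < c) :
    Integrable fun k : ℝ => (1 + 2 * |k|) ^ p * Real.exp (-(c * |k|)) := by
  have hpoly : (fun k : ℝ => (1 + 2 * k) ^ p) =O[atTop] fun k => Real.exp (c / 2 * k) := by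
    have hlim : Tendsto (fun k : ℝ => 1 + 2 * k) atTop atTop :=
      tendsto_atTop_add_const_left _ _ (tendsto_id.const_mul_atTop two_pos)
    refine ((isLittleO_rpow_exp_pos_mul_atTop p (b := c / 4) (by positivity)).isBigO.comp_tendsto
      hlim).trans ?_
    refine (Asymptotics.isBigO_const_mul_self (Real.exp (c / 4)) _ _).congr_left fun k => ?_
    rw [← Real.exp_add, Function.comp_apply]
    ring_nf
  have hdecay : (fun k : ℝ => (1 + 2 * |k|) ^ p * Real.exp (-(c * |k|))) =O[atTop]
      fun k => Real.exp (-(c / 2) * k) := by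
    refine (hpoly.mul (Asymptotics.isBigO_refl (fun k => Real.exp (-(c * k))) _)).congr' ?_ ?_
    · filter_upwards [eventually_ge_atTop 0] with k hk
      rw [abs_of_nonneg hk]
    · filter_upwards with k
      rw [← Real.exp_add]
      ring_nf
  have hpos (k : ℝ) : 0 < 1 + 2 * |k| := by positivity
  have hcont : Continuous fun k : ℝ => (1 + 2 * |k|) ^ p * Real.exp (-(c * |k|)) :=
    ((continuous_const.add (continuous_abs.const_mul 2)).rpow_const fun k =>
      Or.inl (hpos k).ne').mul (by fun_prop)
  exact hcont.locallyIntegrable.integrable_of_isBigO_atTop_of_norm_isNegInvariant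
    (ae_of_all _ fun k => by simp only [Function.comp_apply, abs_neg]) hdecay
    ⟨Ioi 0, Ioi_mem_atTop 0, exp_neg_integrableOn_Ioi 0 (half_pos hc)⟩

lemma memLp_exp_neg_mul_abs_sobolevMeasure (s : ℝ) {c : ℝ} (hc : 0 < c) :
    MemLp (fun k => Real.exp (-(c * |k|))) 2 (sobolevMeasure s) := by
  rw [memLp_two_sobolevMeasure_iff (by fun_prop)]
  convert integrable_rpow_mul_exp_neg_mul_abs (2 * s) (mul_pos two_pos hc) using 3
  rw [Real.norm_eq_abs, Real.abs_exp, ← Real.exp_nat_mul]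
  push_cast
  ring_nf

end Sobolev

/-- **Density of the Cauchy kernels in the Sobolev spaces `H_s`** (Lemma 9.5): for every
real `s`, the linear span of the functions `φ_z(x) = 1/(z-x)`, `z ∈ ℂ∖ℝ`, is dense in
`H_s`. The space `H_s` is described on the Fourier side (via the isometry
`φ ↦ φ̂`, `‖φ‖_{H_s}² = ∫ (1+2|k|)^{2s} |φ̂(k)|² dk`) : any `ψ = φ̂` of finite weighted
L² norm is approximated arbitrarily well by finite linear combinations of the Fourier
transforms `φ̂_{z_i} = cauchyFT z_i` of Cauchy kernels. -/
theorem density_of_cauchy_kernels_in_Hs (s : ℝ) (ψ : ℝ → ℂ) (hψ : Measurable ψ)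
    (hψHs : Integrable (fun k : ℝ => (1 + 2 * |k|) ^ (2 * s) * ‖ψ k‖ ^ 2)) :
    ∀ δ > 0, ∃ (m : ℕ) (zs : Fin m → ℂ) (a : Fin m → ℂ),
      (∀ i, (zs i).im ≠ 0) ∧
      (∫ k : ℝ, (1 + 2 * |k|) ^ (2 * s) * ‖ψ k - ∑ i, a i * cauchyFT (zs i) k‖ ^ 2) < δ := by
  intro δ hδ
  obtain ⟨m, zs, a, hzs, hlt⟩ := density_of_cauchy_kernels_in_Hs_general one_pos
    (sobolevMeasure_singleton s 0) (memLp_exp_neg_mul_abs_sobolevMeasure s one_pos)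
    ((memLp_two_sobolevMeasure_iff hψ.aestronglyMeasurable).2 hψHs) hδ
  refine ⟨m, zs, a, fun i => abs_pos.1 (by rw [hzs]; exact one_pos), ?_⟩
  simpa only [integral_sobolevMeasure, smul_eq_mul] using hlt

end
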